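/- Let α > 1 and suppose that the set K = { (ℓ, j) : ℓ a nonnegative integer, j a positive zero of J_ℓ with j = αℓ } is finite and that there exists c > 0 such that |j − αℓ| ≥ c for every nonnegative integer ℓ and every positive zero j of J_ℓ with j ≠ αℓ. Then for every m ∈ ℝ: the set { (ℓ, j) : ℓ a nonnegative integer, j a positive zero of J_ℓ, j² − α²ℓ² + m = 0 } is finite, and there exists c_m > 0 such that |j² − α²ℓ² + m| ≥ c_m · j for every nonnegative integer ℓ and every positive zero j of J_ℓ with j² − α²ℓ² + m ≠ 0. In particular, the set { j² − α²ℓ² + m : ℓ a nonnegative integer, j a positive zero of J_ℓ } has no finite accumulation point in ℝ. -/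

import Mathlib

open Real Set Filter

/-- The Bessel function of the first kind of order `ν`. -/
noncomputable def besselJ (ν x : ℝ) : ℝ :=
  ∑' m : ℕ, (-1 : ℝ) ^ m / (m.factorial * Real.Gamma (m + ν + 1)) * (x / 2) ^ (2 * (m : ℝ) + ν)

/-- `j` is a positive zero of the Bessel function `J_ν`. -/
def IsPosBesselZero (ν j : ℝ) : Prop := 0 < j ∧ besselJ ν j = 0

noncomputable def hcoef (l m : ℕ) : ℝ := (-1 : ℝ) ^ m / (m.factorial * (m + l).factorial)

noncomputable def hB (l : ℕ) (y : ℝ) : ℝ := ∑' m : ℕ, hcoef l m * y ^ m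

lemma besselJ_eq (l : ℕ) (x : ℝ) (hx : 0 < x) :
    besselJ l x = (x / 2) ^ l * hB l ((x / 2) ^ 2) := by
  unfold besselJ hB
  rw [← tsum_mul_left]
  congr 1
  ext m
  have h1 : Real.Gamma ((m : ℝ) + l + 1) = (m + l).factorial := by
    have := Real.Gamma_nat_eq_factorial (m + l)
    push_cast at this
    exact this
  have h2 : (x / 2) ^ (2 * (m : ℝ) + l) = (x / 2) ^ (2 * m + l) := by
    rw [← Real.rpow_natCast]; push_cast; rfl
  rw [h1, h2, hcoef, pow_add, pow_mul]
  ring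

lemma hcoef_abs (l m : ℕ) (y : ℝ) :
    |hcoef l m * y ^ m| ≤ 1 / l.factorial * ((|y| / (l + 1)) ^ m / m.factorial) := by
  rw [hcoef, abs_mul, abs_div, abs_pow, abs_pow]
  simp only [abs_neg, abs_one, one_pow]
  rw [abs_of_nonneg (by positivity : (0 : ℝ) ≤ m.factorial * (m + l).factorial)]
  have h : ((l.factorial * (l + 1) ^ m : ℕ) : ℝ) ≤ ((l + m).factorial : ℕ) := by
    exact_mod_cast Nat.factorial_mul_pow_le_factorial
  push_cast at h
  rw [add_comm m l]
  have e : 1 / (l.factorial : ℝ) * ((|y| / (l + 1)) ^ m / m.factorial) =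
      1 / (m.factorial * (l.factorial * (l + 1) ^ m)) * |y| ^ m := by
    rw [div_pow]; field_simp
  rw [e]
  gcongr

lemma hB_pos (l : ℕ) (y : ℝ) (h : |y| / (l + 1) < 1 / 2) : hB l y ≠ 0 := by
  set t := |y| / ((l : ℝ) + 1) with ht
  have ht0 : 0 ≤ t := by positivity
  have hs : Summable (fun m : ℕ => 1 / (l.factorial : ℝ) * (t ^ m / m.factorial)) :=
    (Real.summable_pow_div_factorial t).mul_left _
  have hs1 : Summable (fun m : ℕ => hcoef l m * y ^ m) :=
    Summable.of_norm_bounded hs (fun m => hcoef_abs l m y)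
  have e1 := hs1.tsum_eq_zero_add
  have e2 := hs.tsum_eq_zero_add
  rw [tsum_mul_left] at e2
  have e3 : ∑' m : ℕ, t ^ m / (m.factorial : ℝ) = Real.exp t := by
    rw [Real.exp_eq_exp_ℝ, NormedSpace.exp_eq_tsum_div]
  rw [e3] at e2
  have hs' := (summable_nat_add_iff 1).2 hs
  have b := tsum_of_norm_bounded (f := fun m : ℕ => hcoef l (m + 1) * y ^ (m + 1)) hs'.hasSum
    (fun m => hcoef_abs l (m + 1) y)
  have hexp : Real.exp t < 2 := by
    have := Real.exp_one_lt_d9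
    have h4 : Real.exp t < Real.exp (1 / 2) := Real.exp_lt_exp.2 h
    have h5 : Real.exp (1 / 2) * Real.exp (1 / 2) = Real.exp 1 := by
      rw [← Real.exp_add]; norm_num
    nlinarith [Real.exp_pos (1 / 2)]
  have hl : (0 : ℝ) < 1 / l.factorial := by positivity
  intro h0
  unfold hB at h0
  rw [h0] at e1
  have : hcoef l 0 * y ^ 0 = 1 / l.factorial := by simp [hcoef]
  rw [this] at e1
  rw [Real.norm_eq_abs] at b
  have b' := (abs_le.1 b).1
  simp at e2
  simp at b' e1
  rw [one_div] at hl
  have := mul_lt_mul_of_pos_left hexp hl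
  linarith

lemma hB_analytic (l : ℕ) : AnalyticOnNhd ℝ (hB l) univ := by
  have hr : (FormalMultilinearSeries.ofScalars ℝ (hcoef l)).radius = ⊤ := by
    refine FormalMultilinearSeries.radius_eq_top_of_summable_norm _ fun r => ?_
    have hs : Summable (fun m : ℕ => 1 / (l.factorial : ℝ) * ((|(r : ℝ)| / (l + 1)) ^ m / m.factorial)) :=
      (Real.summable_pow_div_factorial _).mul_left _
    refine Summable.of_nonneg_of_le (fun m => by positivity) (fun m => ?_) hs
    refine le_trans ?_ (hcoef_abs l m r)
    rw [FormalMultilinearSeries.ofScalars_norm, abs_mul, Real.norm_eq_abs]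
    simp
  have h := FormalMultilinearSeries.hasFPowerSeriesOnBall
    (FormalMultilinearSeries.ofScalars ℝ (hcoef l)) (by rw [hr]; simp)
  rw [hr] at h
  have h2 := h.analyticOnNhd
  have h3 : (FormalMultilinearSeries.ofScalars ℝ (hcoef l)).sum = hB l := by
    ext y
    simp [FormalMultilinearSeries.sum, hB, mul_comm]
  rw [h3] at h2
  intro x _
  exact h2 x (by simp)

lemma hB_fin (l : ℕ) (R : ℝ) : {y : ℝ | y ∈ Icc 0 R ∧ hB l y = 0}.Finite := by
  by_contra hinf
  obtain ⟨z, -, hz⟩ := Set.Infinite.exists_accPt_of_subset_isCompact hinf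
    (isCompact_Icc (a := (0 : ℝ)) (b := R)) (fun y hy => hy.1)
  rw [accPt_iff_frequently_nhdsNE] at hz
  have := (hB_analytic l).eqOn_zero_of_preconnected_of_frequently_eq_zero
    isPreconnected_univ (mem_univ z) (hz.mono fun y hy => hy.2)
  exact hB_pos l 0 (by simp) (this (mem_univ 0))

lemma zeros_fin (R : ℝ) : {p : ℕ × ℝ | IsPosBesselZero p.1 p.2 ∧ p.2 ≤ R}.Finite := by
  obtain ⟨N, hN⟩ := exists_nat_gt (2 * (R / 2) ^ 2)
  have hz : ∀ (l : ℕ) (j : ℝ), IsPosBesselZero l j → hB l ((j / 2) ^ 2) = 0 := by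
    rintro l j ⟨h0, h1⟩
    rw [besselJ_eq l j h0] at h1
    exact (mul_eq_zero.1 h1).resolve_left (by positivity)
  have hfin : (⋃ l ∈ Set.Iio N, (fun y : ℝ => (l, 2 * √y)) ''
      {y : ℝ | y ∈ Icc 0 ((R / 2) ^ 2) ∧ hB l y = 0}).Finite :=
    (Set.finite_Iio N).biUnion fun l _ => (hB_fin l _).image _
  refine hfin.subset ?_
  rintro ⟨l, j⟩ ⟨hj, hR⟩
  simp only at hj hR
  have h0 := hj.1
  have hle : (j / 2) ^ 2 ≤ (R / 2) ^ 2 := by gcongr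
  have hlN : l < N := by
    by_contra hlN
    push Not at hlN
    have hlN' : (N : ℝ) ≤ l := by exact_mod_cast hlN
    refine hB_pos l ((j / 2) ^ 2) ?_ (hz l j hj)
    rw [abs_of_nonneg (by positivity), div_lt_iff₀ (by positivity)]
    linarith
  simp only [mem_iUnion]
  refine ⟨l, hlN, (j / 2) ^ 2, ⟨⟨by positivity, hle⟩, hz l j hj⟩, ?_⟩
  have e : √((j / 2) ^ 2) = j / 2 := Real.sqrt_sq (by positivity)
  ext
  · rfl
  · change 2 * √((j / 2) ^ 2) = j
    rw [e]; ring

theorem stmt_13 (α : ℝ) (hα : 1 < α)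
    (hK : {p : ℕ × ℝ | IsPosBesselZero p.1 p.2 ∧ p.2 = α * p.1}.Finite)
    (hc : ∃ c : ℝ, 0 < c ∧ ∀ (ℓ : ℕ) (j : ℝ), IsPosBesselZero ℓ j → j ≠ α * ℓ →
      c ≤ |j - α * ℓ|) :
    ∀ m : ℝ,
      {p : ℕ × ℝ | IsPosBesselZero p.1 p.2 ∧
        p.2 ^ 2 - α ^ 2 * (p.1 : ℝ) ^ 2 + m = 0}.Finite ∧
      (∃ cm : ℝ, 0 < cm ∧ ∀ (ℓ : ℕ) (j : ℝ), IsPosBesselZero ℓ j →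
        j ^ 2 - α ^ 2 * (ℓ : ℝ) ^ 2 + m ≠ 0 →
        cm * j ≤ |j ^ 2 - α ^ 2 * (ℓ : ℝ) ^ 2 + m|) ∧
      (∀ Λ : ℝ, ¬ AccPt Λ (Filter.principal
        {x : ℝ | ∃ (ℓ : ℕ) (j : ℝ), IsPosBesselZero ℓ j ∧
          x = j ^ 2 - α ^ 2 * (ℓ : ℝ) ^ 2 + m})) := by
  intro m
  obtain ⟨c, hc0, hc⟩ := hc
  have key : ∀ (ℓ : ℕ) (j : ℝ), IsPosBesselZero ℓ j → j ≠ α * ℓ →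
      c * j - |m| ≤ |j ^ 2 - α ^ 2 * (ℓ : ℝ) ^ 2 + m| := by
    intro l j hj hne
    have h1 := hc l j hj hne
    have h0 := hj.1
    have hl : (0 : ℝ) ≤ α * l := by positivity
    have e : |j ^ 2 - α ^ 2 * (l : ℝ) ^ 2| = |j - α * l| * (j + α * l) := by
      rw [← abs_of_nonneg (by positivity : 0 ≤ j + α * l), ← abs_mul]
      congr 1; ring
    have h2 : c * j ≤ |j - α * l| * (j + α * l) := by
      apply mul_le_mul h1 (by linarith) h0.le (abs_nonneg _)
    have h3 := abs_sub_abs_le_abs_sub (j ^ 2 - α ^ 2 * (l : ℝ) ^ 2) (-m)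
    rw [abs_neg, sub_neg_eq_add] at h3
    linarith
  have hF : ({p : ℕ × ℝ | IsPosBesselZero p.1 p.2 ∧ p.2 = α * p.1} ∪
    {p : ℕ × ℝ | IsPosBesselZero p.1 p.2 ∧ p.2 ≤ 2 * |m| / c}).Finite :=
    hK.union (zeros_fin _)
  set F := ({p : ℕ × ℝ | IsPosBesselZero p.1 p.2 ∧ p.2 = α * p.1} ∪
    {p : ℕ × ℝ | IsPosBesselZero p.1 p.2 ∧ p.2 ≤ 2 * |m| / c}) with hFdef
  have out : ∀ (ℓ : ℕ) (j : ℝ), IsPosBesselZero ℓ j → (ℓ, j) ∉ F →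
      c / 2 * j ≤ |j ^ 2 - α ^ 2 * (ℓ : ℝ) ^ 2 + m| := by
    intro l j hj hn
    have hne : j ≠ α * l := fun h => hn (Or.inl ⟨hj, h⟩)
    have hgt : 2 * |m| / c < j := by
      by_contra h
      exact hn (Or.inr ⟨hj, not_lt.1 h⟩)
    rw [div_lt_iff₀ hc0] at hgt
    have := key l j hj hne
    linarith
  have hZ : {p : ℕ × ℝ | IsPosBesselZero p.1 p.2 ∧
        p.2 ^ 2 - α ^ 2 * (p.1 : ℝ) ^ 2 + m = 0}.Finite := by
    refine hF.subset ?_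
    rintro ⟨l, j⟩ ⟨hj, h⟩
    by_contra hn
    have := out l j hj hn
    simp only at h
    rw [h, abs_zero] at this
    have := hj.1
    simp only at this
    nlinarith
  have hL : ∃ cm : ℝ, 0 < cm ∧ ∀ (ℓ : ℕ) (j : ℝ), IsPosBesselZero ℓ j →
        j ^ 2 - α ^ 2 * (ℓ : ℝ) ^ 2 + m ≠ 0 →
        cm * j ≤ |j ^ 2 - α ^ 2 * (ℓ : ℝ) ^ 2 + m| := by
    have hG : (F ∩ {p : ℕ × ℝ | IsPosBesselZero p.1 p.2 ∧
        p.2 ^ 2 - α ^ 2 * (p.1 : ℝ) ^ 2 + m ≠ 0}).Finite := hF.inter_of_left _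
    have hd : ∃ d : ℝ, 0 < d ∧ ∀ p ∈ (F ∩ {p : ℕ × ℝ | IsPosBesselZero p.1 p.2 ∧
        p.2 ^ 2 - α ^ 2 * (p.1 : ℝ) ^ 2 + m ≠ 0}),
        d ≤ |p.2 ^ 2 - α ^ 2 * (p.1 : ℝ) ^ 2 + m| / p.2 := by
      rcases Set.eq_empty_or_nonempty (F ∩ {p : ℕ × ℝ | IsPosBesselZero p.1 p.2 ∧
        p.2 ^ 2 - α ^ 2 * (p.1 : ℝ) ^ 2 + m ≠ 0}) with he | hne
      · exact ⟨1, one_pos, by rw [he]; simp⟩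
      · obtain ⟨q, hq, hmin⟩ := Set.exists_min_image _
          (fun p : ℕ × ℝ => |p.2 ^ 2 - α ^ 2 * (p.1 : ℝ) ^ 2 + m| / p.2) hG hne
        exact ⟨_, div_pos (abs_pos.2 hq.2.2) hq.2.1.1, hmin⟩
    obtain ⟨d, hd0, hd⟩ := hd
    refine ⟨min d (c / 2), lt_min hd0 (by positivity), fun l j hj hne => ?_⟩
    have h0 := hj.1
    by_cases hm : (l, j) ∈ F
    · have := hd (l, j) ⟨hm, hj, hne⟩
      rw [le_div_iff₀ h0] at this
      exact le_trans (by gcongr; exact min_le_left _ _) this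
    · exact le_trans (by gcongr; exact min_le_right _ _) (out l j hj hm)
  refine ⟨hZ, hL, ?_⟩
  intro Λ hacc
  obtain ⟨cm, hcm, hL⟩ := hL
  have hfin := (hZ.union (zeros_fin ((|Λ| + 1) / cm))).image
    (fun p : ℕ × ℝ => p.2 ^ 2 - α ^ 2 * (p.1 : ℝ) ^ 2 + m)
  set T := (fun p : ℕ × ℝ => p.2 ^ 2 - α ^ 2 * (p.1 : ℝ) ^ 2 + m) '' (_ ∪ _) with hT
  rw [accPt_iff_frequently_nhdsNE] at hacc
  have hev : ∀ᶠ y in nhdsWithin Λ {Λ}ᶜ, |y| < |Λ| + 1 :=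
    nhdsWithin_le_nhds (continuous_abs.continuousAt.eventually_lt_const (by linarith))
  have hTacc : AccPt Λ (Filter.principal T) := by
    rw [accPt_iff_frequently_nhdsNE]
    refine (hacc.and_eventually hev).mono ?_
    rintro y ⟨⟨l, j, hj, rfl⟩, hy⟩
    refine ⟨(l, j), ?_, rfl⟩
    by_cases h : j ^ 2 - α ^ 2 * (l : ℝ) ^ 2 + m = 0
    · exact Or.inl ⟨hj, h⟩
    · refine Or.inr ⟨hj, ?_⟩
      have := hL l j hj h
      rw [le_div_iff₀ hcm]
      simp only
      linarith
  exact (Set.Finite.not_infinite hfin) (Set.Infinite.of_accPt hTacc)
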